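/- Let S be a finite semigroup in which every idempotent is a right zero (i.e., s·e = e for every s ∈ S and every idempotent e ∈ S). Then for every integer k > |S|, S satisfies the identity y·x_1⋯x_k = x_1⋯x_k: for all y, x_1, …, x_k ∈ S, y·x_1⋯x_k = x_1⋯x_k. -/

import Mathlib

/-!
Right multiples of right zeros are right zeros. If `p * w = p` for some `w`, then the elements
fixing `p` on the right form a subsemigroup; as soon as it contains an idempotent `e`, and `e` is a
right zero, `p = p * e = e` is a right zero. Hence the prefixes `x a, x a * x (a + 1), …` of a
product that is not a right zero are pairwise distinct non-idempotents, and a product of more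
factors than there are non-idempotents is a right zero.
-/

/-- `sprod f a b` is the product `f a * f (a+1) * ⋯ * f b` in a semigroup (for `a ≤ b`). -/
def sprod {S : Type*} [Semigroup S] (f : ℕ → S) (a b : ℕ) : S :=
  (List.range (b - a)).foldl (fun x r => x * f (a + r + 1)) (f a)

section Products

variable {S : Type*} [Semigroup S] (f : ℕ → S) {a b c : ℕ}

theorem sprod_self (a : ℕ) : sprod f a a = f a := by
  simp [sprod]

theorem sprod_succ (hab : a ≤ b) : sprod f a (b + 1) = sprod f a b * f (b + 1) := by
  simp [sprod, Nat.succ_sub hab, List.range_succ, Nat.add_sub_cancel' hab]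

theorem sprod_mul_sprod (hab : a ≤ b) (hbc : b < c) :
    sprod f a b * sprod f (b + 1) c = sprod f a c := by
  induction c, hbc using Nat.le_induction with
  | base => rw [sprod_self, sprod_succ f hab]
  | succ c hbc ih =>
    rw [sprod_succ f hbc, ← mul_assoc, ih, sprod_succ f (hab.trans (Nat.le_of_succ_le hbc))]

end Products

/-- A right zero of a semigroup: an element absorbing every element multiplied on its left. -/
def IsRightZero {S : Type*} [Mul S] (e : S) : Prop :=
  ∀ s : S, s * e = e

theorem IsRightZero.mul_right {S : Type*} [Semigroup S] {e : S} (he : IsRightZero e) (t : S) :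
    IsRightZero (e * t) := fun s => by
  rw [← mul_assoc, he s]

theorem IsRightZero.sprod_of_le {S : Type*} [Semigroup S] {f : ℕ → S} {a b c : ℕ}
    (hb : IsRightZero (sprod f a b)) (hab : a ≤ b) (hbc : b ≤ c) : IsRightZero (sprod f a c) := by
  rcases hbc.eq_or_lt with rfl | hbc
  · exact hb
  · rw [← sprod_mul_sprod f hab hbc]
    exact hb.mul_right _

theorem exists_isIdempotentElem_mem_of_finite {S : Type*} [Semigroup S] {T : Set S}
    (hne : T.Nonempty) (hfin : T.Finite) (hmul : ∀ u ∈ T, ∀ v ∈ T, u * v ∈ T) :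
    ∃ e ∈ T, IsIdempotentElem e := by
  let _ : TopologicalSpace S := ⊥
  have _ : DiscreteTopology S := ⟨rfl⟩
  exact exists_idempotent_in_compact_subsemigroup
    (fun _ => continuous_of_discreteTopology) T hne hfin.isCompact hmul

section IdempotentsAreRightZeros

variable {S : Type*} [Semigroup S]

theorem exists_isIdempotentElem_mul_eq_self (hfin : {s : S | ¬IsIdempotentElem s}.Finite)
    {p w : S} (hpw : p * w = p) : ∃ e : S, IsIdempotentElem e ∧ p * e = p := by
  -- Without idempotents, the subsemigroup of the `v` with `p * v = p` would be finite.
  by_contra! hnone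
  obtain ⟨e, hpe, he⟩ := exists_isIdempotentElem_mem_of_finite (T := {v | p * v = p}) ⟨w, hpw⟩
    (hfin.subset fun v hpv hv => hnone v hv hpv)
    (fun u (hpu : p * u = p) v (hpv : p * v = p) =>
      show p * (u * v) = p by rw [← mul_assoc, hpu, hpv])
  exact hnone e he hpe

theorem isRightZero_of_mul_eq_self (h : ∀ e : S, IsIdempotentElem e → IsRightZero e)
    (hfin : {s : S | ¬IsIdempotentElem s}.Finite) {p w : S} (hpw : p * w = p) :
    IsRightZero p := by
  obtain ⟨e, he, hpe⟩ := exists_isIdempotentElem_mul_eq_self hfin hpw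
  have hep : e = p := (h e he p).symm.trans hpe
  exact hep ▸ h e he

theorem injOn_sprod_of_not_isRightZero (h : ∀ e : S, IsIdempotentElem e → IsRightZero e)
    (hfin : {s : S | ¬IsIdempotentElem s}.Finite) {f : ℕ → S} {a b : ℕ}
    (hb : ¬IsRightZero (sprod f a b)) : Set.InjOn (sprod f a) (Set.Icc a b) := by
  have ne_of_lt {i j : ℕ} (hai : a ≤ i) (hij : i < j) (hjb : j ≤ b) :
      sprod f a i ≠ sprod f a j := fun heq => by
    have hi : IsRightZero (sprod f a i) :=
      isRightZero_of_mul_eq_self h hfin ((sprod_mul_sprod f hai hij).trans heq.symm)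
    exact hb (hi.sprod_of_le hai (hij.le.trans hjb))
  intro i hi j hj heq
  rcases lt_trichotomy i j with hij | hij | hji
  · exact absurd heq (ne_of_lt hi.1 hij hj.2)
  · exact hij
  · exact absurd heq.symm (ne_of_lt hj.1 hji hi.2)

theorem isRightZero_sprod_of_ncard_lt (h : ∀ e : S, IsIdempotentElem e → IsRightZero e)
    (hfin : {s : S | ¬IsIdempotentElem s}.Finite) (f : ℕ → S) {a b : ℕ}
    (hcard : {s : S | ¬IsIdempotentElem s}.ncard < b + 1 - a) : IsRightZero (sprod f a b) := by
  by_contra hb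
  have prefix_mem : ∀ i ∈ Set.Icc a b, sprod f a i ∈ {s : S | ¬IsIdempotentElem s} :=
    fun i hi hidem => hb ((h _ hidem).sprod_of_le hi.1 hi.2)
  have hle := Set.ncard_le_ncard_of_injOn (sprod f a) prefix_mem
    (injOn_sprod_of_not_isRightZero h hfin hb) hfin
  rw [← Finset.coe_Icc, Set.ncard_coe_finset, Nat.card_Icc] at hle
  exact hle.not_gt hcard

end IdempotentsAreRightZeros

theorem statement15_general {S : Type*} [Semigroup S]
    (h : ∀ e s : S, e * e = e → s * e = e) (hfin : {s : S | ¬IsIdempotentElem s}.Finite) :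
    ∀ k : ℕ, {s : S | ¬IsIdempotentElem s}.ncard < k →
      ∀ (y : S) (x : ℕ → S), y * sprod x 1 k = sprod x 1 k := fun _ hk y x =>
  isRightZero_sprod_of_ncard_lt (fun e he s => h e s he) hfin x hk y

/-- If every idempotent of a finite semigroup `S` is a right zero, then for every `k > |S|`
the semigroup `S` satisfies the identity `y * x 1 * ⋯ * x k = x 1 * ⋯ * x k`. -/
theorem statement15 {S : Type*} [Semigroup S] [Fintype S]
    (h : ∀ e s : S, e * e = e → s * e = e) :
    ∀ k : ℕ, Fintype.card S < k →
      ∀ (y : S) (x : ℕ → S), y * sprod x 1 k = sprod x 1 k := fun k hk =>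
  statement15_general h (Set.toFinite _) k <|
    (Set.ncard_le_card _).trans_lt (Nat.card_eq_fintype_card (α := S) ▸ hk)
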